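/- Define x₁, x₂ : ℝ → ℝ and x₃ : ℝ² → ℝ by x₁(u₁) = ∫₀^{u₁} e^{t²} dt, x₂(u₂) = ∫₀^{u₂} e^{-t²} dt, x₃(u₁,u₂) = ∫₀^{u₁} e^{t²}(∫₀^{t} e^{-s²} ds) dt + ∫₀^{u₂} e^{-t²}(∫₀^{t} e^{s²} ds) dt, and define y : ℝ³ → ℝ⁴ by y(t,u₁,u₂) = (e^{t}, e^{t}x₁(u₁), e^{t}x₂(u₂), e^{t}x₃(u₁,u₂) + t e^{t}). Then y is smooth and satisfies at every (t,u₁,u₂) ∈ ℝ³: ∂²y/∂t² = 2·∂y/∂t - y; ∂²y/∂t∂u₁ = ∂y/∂u₁; ∂²y/∂t∂u₂ = ∂y/∂u₂; ∂²y/∂u₁² = 2u₁·∂y/∂u₁ + ∂y/∂t - y; ∂²y/∂u₂² = -2u₂·∂y/∂u₂ + ∂y/∂t - y; and ∂²y/∂u₁∂u₂ = 0. -/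

import Mathlib

/-!
Each coordinate of `yMap` is built from `exp` and primitives of smooth functions, so it is smooth,
and the fundamental theorem of calculus gives its first derivatives in closed form. With
`dx₁/du = exp (u²)`, `dx₂/du = exp (-u²)`, `∂x₃/∂u₁ = exp (u₁²) x₂(u₁)` and
`∂x₃/∂u₂ = exp (-u₂²) x₁(u₂)`, a second differentiation produces, in the last coordinate of
`∂²y/∂uᵢ²`, the extra term `eᵗ exp (u²) exp (-u²) = eᵗ`. Since
`∂y/∂t - y = (0, 0, 0, eᵗ)`, this is exactly the term `∂y/∂t - y` of the structure equations.
The mixed derivative `∂²y/∂u₁∂u₂` vanishes because `x₃` is a sum of a function of `u₁` and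
a function of `u₂`.
-/

noncomputable section
open Real

/-- Partial derivative in the first of three real variables. -/
def Pt {E : Type*} [NormedAddCommGroup E] [NormedSpace ℝ E]
    (g : ℝ → ℝ → ℝ → E) : ℝ → ℝ → ℝ → E := fun t a b => deriv (fun s => g s a b) t

/-- Partial derivative in the second of three real variables. -/
def Pu₁ {E : Type*} [NormedAddCommGroup E] [NormedSpace ℝ E]
    (g : ℝ → ℝ → ℝ → E) : ℝ → ℝ → ℝ → E := fun t a b => deriv (fun s => g t s b) a

/-- Partial derivative in the third of three real variables. -/
def Pu₂ {E : Type*} [NormedAddCommGroup E] [NormedSpace ℝ E]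
    (g : ℝ → ℝ → ℝ → E) : ℝ → ℝ → ℝ → E := fun t a b => deriv (fun s => g t a s) b

/-- `x₁(u₁) = ∫₀^{u₁} e^{t²} dt`. -/
def xx₁ : ℝ → ℝ := fun u => ∫ t in (0:ℝ)..u, Real.exp (t^2)

/-- `x₂(u₂) = ∫₀^{u₂} e^{-t²} dt`. -/
def xx₂ : ℝ → ℝ := fun u => ∫ t in (0:ℝ)..u, Real.exp (-t^2)

/-- `x₃(u₁,u₂)`. -/
def xx₃ : ℝ → ℝ → ℝ := fun u₁ u₂ =>
  (∫ t in (0:ℝ)..u₁, Real.exp (t^2) * ∫ s in (0:ℝ)..t, Real.exp (-s^2))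
  + ∫ t in (0:ℝ)..u₂, Real.exp (-t^2) * ∫ s in (0:ℝ)..t, Real.exp (s^2)

/-- The type II Calabi product `y(t,u₁,u₂) = (eᵗ, eᵗx₁, eᵗx₂, eᵗx₃ + teᵗ)` of a point and
the Calabi affine maximal surface of Theorem 1.2(i). -/
def yMap : ℝ → ℝ → ℝ → (Fin 4 → ℝ) := fun t u₁ u₂ =>
  ![Real.exp t, Real.exp t * xx₁ u₁, Real.exp t * xx₂ u₂,
    Real.exp t * xx₃ u₁ u₂ + t * Real.exp t]

lemma hasDerivAt_primitive {f : ℝ → ℝ} (hf : Continuous f) (u : ℝ) :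
    HasDerivAt (fun u => ∫ t in (0:ℝ)..u, f t) (f u) u :=
  hf.integral_hasStrictDerivAt 0 u |>.hasDerivAt

lemma contDiff_primitive {f : ℝ → ℝ} (hf : ContDiff ℝ (⊤ : ℕ∞) f) :
    ContDiff ℝ (⊤ : ℕ∞) (fun u => ∫ t in (0:ℝ)..u, f t) := by
  rw [contDiff_infty_iff_deriv]
  refine ⟨fun u => (hasDerivAt_primitive hf.continuous u).differentiableAt, ?_⟩
  rwa [funext fun u => (hasDerivAt_primitive hf.continuous u).deriv]

lemma contDiff_xx₁ : ContDiff ℝ (⊤ : ℕ∞) xx₁ := contDiff_primitive (by fun_prop)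

lemma contDiff_xx₂ : ContDiff ℝ (⊤ : ℕ∞) xx₂ := contDiff_primitive (by fun_prop)

lemma hasDerivAt_xx₁ (u : ℝ) : HasDerivAt xx₁ (exp (u ^ 2)) u :=
  hasDerivAt_primitive (f := fun t => exp (t ^ 2)) (by fun_prop) u

lemma hasDerivAt_xx₂ (u : ℝ) : HasDerivAt xx₂ (exp (-u ^ 2)) u :=
  hasDerivAt_primitive (f := fun t => exp (-t ^ 2)) (by fun_prop) u

/-- The summand of `x₃` depending on `u₁`; `xx₃ a b` is `xx₃a a + xx₃b b` by definition. -/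
def xx₃a : ℝ → ℝ := fun u => ∫ t in (0:ℝ)..u, exp (t ^ 2) * xx₂ t

/-- The summand of `x₃` depending on `u₂`. -/
def xx₃b : ℝ → ℝ := fun u => ∫ t in (0:ℝ)..u, exp (-t ^ 2) * xx₁ t

lemma contDiff_xx₃a : ContDiff ℝ (⊤ : ℕ∞) xx₃a :=
  contDiff_primitive (ContDiff.mul (by fun_prop) contDiff_xx₂)

lemma contDiff_xx₃b : ContDiff ℝ (⊤ : ℕ∞) xx₃b :=
  contDiff_primitive (ContDiff.mul (by fun_prop) contDiff_xx₁)

lemma hasDerivAt_xx₃a (u : ℝ) : HasDerivAt xx₃a (exp (u ^ 2) * xx₂ u) u :=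
  hasDerivAt_primitive (f := fun t => exp (t ^ 2) * xx₂ t)
    (Continuous.mul (by fun_prop) contDiff_xx₂.continuous) u

lemma hasDerivAt_xx₃b (u : ℝ) : HasDerivAt xx₃b (exp (-u ^ 2) * xx₁ u) u :=
  hasDerivAt_primitive (f := fun t => exp (-t ^ 2) * xx₁ t)
    (Continuous.mul (by fun_prop) contDiff_xx₁.continuous) u

lemma hasDerivAt_vec4 {f₀ f₁ f₂ f₃ : ℝ → ℝ} {d₀ d₁ d₂ d₃ x : ℝ}
    (h₀ : HasDerivAt f₀ d₀ x) (h₁ : HasDerivAt f₁ d₁ x)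
    (h₂ : HasDerivAt f₂ d₂ x) (h₃ : HasDerivAt f₃ d₃ x) :
    HasDerivAt (fun s => ![f₀ s, f₁ s, f₂ s, f₃ s]) ![d₀, d₁, d₂, d₃] x := by
  rw [hasDerivAt_pi]
  intro i
  fin_cases i
  exacts [h₀, h₁, h₂, h₃]

lemma contDiff_yMap :
    ContDiff ℝ (⊤ : ℕ∞) (fun p : ℝ × ℝ × ℝ => yMap p.1 p.2.1 p.2.2) := by
  have h₁ := contDiff_xx₁
  have h₂ := contDiff_xx₂
  have ha := contDiff_xx₃a
  have hb := contDiff_xx₃b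
  rw [contDiff_pi]
  intro i
  fin_cases i
  · change ContDiff ℝ (⊤ : ℕ∞) (fun p : ℝ × ℝ × ℝ => exp p.1)
    fun_prop
  · change ContDiff ℝ (⊤ : ℕ∞) (fun p : ℝ × ℝ × ℝ => exp p.1 * xx₁ p.2.1)
    fun_prop
  · change ContDiff ℝ (⊤ : ℕ∞) (fun p : ℝ × ℝ × ℝ => exp p.1 * xx₂ p.2.2)
    fun_prop
  · change ContDiff ℝ (⊤ : ℕ∞)
      (fun p : ℝ × ℝ × ℝ => exp p.1 * (xx₃a p.2.1 + xx₃b p.2.2) + p.1 * exp p.1)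
    fun_prop

lemma Pt_yMap : Pt yMap = fun t a b =>
    ![exp t, exp t * xx₁ a, exp t * xx₂ b, exp t * xx₃ a b + (exp t + t * exp t)] := by
  funext t a b
  have he := Real.hasDerivAt_exp t
  refine (hasDerivAt_vec4 he (he.mul_const _) (he.mul_const _)
    ((he.mul_const _).add (((hasDerivAt_id t).mul he).congr_deriv ?_))).deriv
  simp

lemma Pu₁_yMap : Pu₁ yMap = fun t a _ =>
    ![0, exp t * exp (a ^ 2), 0, exp t * (exp (a ^ 2) * xx₂ a)] := by
  funext t a b
  exact (hasDerivAt_vec4 (hasDerivAt_const a _) ((hasDerivAt_xx₁ a).const_mul _)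
    (hasDerivAt_const a _)
    ((((hasDerivAt_xx₃a a).add_const (xx₃b b)).const_mul (exp t)).add_const (t * exp t))).deriv

lemma Pu₂_yMap : Pu₂ yMap = fun t _ b =>
    ![0, 0, exp t * exp (-b ^ 2), exp t * (exp (-b ^ 2) * xx₁ b)] := by
  funext t a b
  exact (hasDerivAt_vec4 (hasDerivAt_const b _) (hasDerivAt_const b _)
    ((hasDerivAt_xx₂ b).const_mul _)
    ((((hasDerivAt_xx₃b b).const_add (xx₃a a)).const_mul (exp t)).add_const (t * exp t))).deriv

lemma hasDerivAt_exp_sq (u : ℝ) :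
    HasDerivAt (fun u : ℝ => exp (u ^ 2)) (2 * u * exp (u ^ 2)) u :=
  ((hasDerivAt_pow 2 u).exp).congr_deriv (by simp; ring)

lemma hasDerivAt_exp_neg_sq (u : ℝ) :
    HasDerivAt (fun u : ℝ => exp (-u ^ 2)) (-(2 * u) * exp (-u ^ 2)) u :=
  ((hasDerivAt_pow 2 u).neg.exp).congr_deriv (by simp; ring)

lemma exp_sq_mul_exp_neg_sq (u : ℝ) : exp (u ^ 2) * exp (-u ^ 2) = 1 := by
  rw [← Real.exp_add, add_neg_cancel, Real.exp_zero]

/-- **centroaffine structure equations of Theorem 1.2(ii).** -/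
theorem stmt9 :
    ContDiff ℝ (⊤ : ℕ∞) (fun p : ℝ × ℝ × ℝ => yMap p.1 p.2.1 p.2.2) ∧
    (∀ t u₁ u₂ : ℝ, Pt (Pt yMap) t u₁ u₂ = (2:ℝ) • Pt yMap t u₁ u₂ - yMap t u₁ u₂) ∧
    (∀ t u₁ u₂ : ℝ, Pt (Pu₁ yMap) t u₁ u₂ = Pu₁ yMap t u₁ u₂) ∧
    (∀ t u₁ u₂ : ℝ, Pt (Pu₂ yMap) t u₁ u₂ = Pu₂ yMap t u₁ u₂) ∧
    (∀ t u₁ u₂ : ℝ, Pu₁ (Pu₁ yMap) t u₁ u₂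
        = (2 * u₁) • Pu₁ yMap t u₁ u₂ + Pt yMap t u₁ u₂ - yMap t u₁ u₂) ∧
    (∀ t u₁ u₂ : ℝ, Pu₂ (Pu₂ yMap) t u₁ u₂
        = (-(2 * u₂)) • Pu₂ yMap t u₁ u₂ + Pt yMap t u₁ u₂ - yMap t u₁ u₂) ∧
    (∀ t u₁ u₂ : ℝ, Pu₂ (Pu₁ yMap) t u₁ u₂ = 0) := by
  refine ⟨contDiff_yMap, fun t a b => ?_, fun t a b => ?_, fun t a b => ?_, fun t a b => ?_,
    fun t a b => ?_, fun t a b => ?_⟩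
  · rw [Pt_yMap]
    have he := Real.hasDerivAt_exp t
    refine (hasDerivAt_vec4 he (he.mul_const _) (he.mul_const _)
      ((he.mul_const _).add (he.add ((hasDerivAt_id t).mul he)))).deriv.trans ?_
    ext i
    fin_cases i <;> simp [yMap] <;> ring
  · rw [Pu₁_yMap]
    have he := Real.hasDerivAt_exp t
    exact (hasDerivAt_vec4 (hasDerivAt_const t _) (he.mul_const _) (hasDerivAt_const t _)
      (he.mul_const _)).deriv
  · rw [Pu₂_yMap]
    have he := Real.hasDerivAt_exp t
    exact (hasDerivAt_vec4 (hasDerivAt_const t _) (hasDerivAt_const t _) (he.mul_const _)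
      (he.mul_const _)).deriv
  · rw [Pu₁_yMap, Pt_yMap]
    have he := hasDerivAt_exp_sq a
    refine (hasDerivAt_vec4 (hasDerivAt_const a _) (he.const_mul _) (hasDerivAt_const a _)
      ((he.mul (hasDerivAt_xx₂ a)).const_mul _)).deriv.trans ?_
    rw [exp_sq_mul_exp_neg_sq]
    ext i
    fin_cases i <;> simp [yMap] <;> ring
  · rw [Pu₂_yMap, Pt_yMap]
    have he := hasDerivAt_exp_neg_sq b
    refine (hasDerivAt_vec4 (hasDerivAt_const b _) (hasDerivAt_const b _) (he.const_mul _)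
      ((he.mul (hasDerivAt_xx₁ b)).const_mul _)).deriv.trans ?_
    rw [mul_comm (exp (-b ^ 2)) (exp (b ^ 2)), exp_sq_mul_exp_neg_sq]
    ext i
    fin_cases i <;> simp [yMap] <;> ring
  · rw [Pu₁_yMap]
    exact deriv_const b _
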